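/- Let n ≥ 2, λ > 0, L > 2λ, let g = 4π ∑_{j=1}^{k₁} m_j δ_{p_j}, h = 4π ∑_{j=1}^{k₂} n_j δ_{q_j} with m_j, n_j ∈ ℕ, and let Ω ⊂ ℤⁿ be a connected finite subset containing all the points p_j and q_j. Let (u_k, v_k) be the iterative sequence with u₀ = v₀ = 0, (Δ − L)u_k = λ e^{v_{k−1}} (e^{u_{k−1}} − 1) + g − L u_{k−1} in Ω, (Δ − L)v_k = λ e^{u_{k−1}} (e^{v_{k−1}} − 1) + h − L v_{k−1} in Ω, u_k = v_k = 0 on δΩ. Then u_k and v_k converge pointwise on Ω̄ to functions u_Ω and v_Ω satisfying Δu_Ω = λ e^{v_Ω} (e^{u_Ω} − 1) + g in Ω, Δv_Ω = λ e^{u_Ω} (e^{v_Ω} − 1) + h in Ω, and u_Ω = v_Ω = 0 on δΩ. -/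

import Mathlib

/-!
For `a, b ≤ 0` and `0 ≤ λ ≤ L` the function `λ eᵇ (eᵃ - 1) - L a` is decreasing in `a` and in `b`,
so the comparison principle for `Δ - L` makes the scheme decreasing in `k`, starting from `0`.
A function `w` with `Δw ≥ g` in `Ω` and `w ≤ 0` on `Ω̄` remains below every `u_k`, because the
reaction term `λ eᵛ (eᵘ - 1)` is nonpositive where `u ≤ 0`; a multiple of `x_i² - R` is such a `w`.
Hence the scheme converges, and as `Δ` involves only finitely many neighbours, one may pass to the
limit in the equations.
-/

open Filter Real

noncomputable section

namespace CS

abbrev Lat (n : ℕ) := Fin n → ℤ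

/-- d(x) = ∑ᵢ |xᵢ|, the graph distance to the origin on ℤⁿ. -/
def latDist {n : ℕ} (x : Lat n) : ℕ := ∑ i, (x i).natAbs

/-- x ~ y iff ∑ᵢ |xᵢ − yᵢ| = 1. -/
def adjacent {n : ℕ} (x y : Lat n) : Prop := (∑ i, (x i - y i).natAbs) = 1

instance {n : ℕ} (x y : Lat n) : Decidable (adjacent x y) :=
  decidable_of_iff ((∑ i, (x i - y i).natAbs) = 1) Iff.rfl

def unitVec {n : ℕ} (i : Fin n) : Lat n := fun j => if j = i then 1 else 0

/-- The graph Laplacian Δu(x) = ∑_{y ~ x} (u(y) − u(x)) on ℤⁿ. -/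
def lapl {n : ℕ} (u : Lat n → ℝ) (x : Lat n) : ℝ :=
  ∑ i, (u (x + unitVec i) + u (x - unitVec i) - 2 * u x)

/-- The filter of neighborhoods of infinity (d(x) → +∞) on ℤⁿ. -/
def atInfty (n : ℕ) : Filter (Lat n) := Filter.comap latDist Filter.atTop

/-- The Dirac mass at p. -/
def dirac {n : ℕ} (p x : Lat n) : ℝ := if x = p then 1 else 0

/-- (u,v) is a topological solution of Δu = λ eᵛ(eᵘ−1) + g, Δv = λ eᵘ(eᵛ−1) + h
with u, v → 0 at infinity. -/
def IsTopSol {n : ℕ} (lam : ℝ) (g h u v : Lat n → ℝ) : Prop :=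
  (∀ x, lapl u x = lam * Real.exp (v x) * (Real.exp (u x) - 1) + g x) ∧
  (∀ x, lapl v x = lam * Real.exp (u x) * (Real.exp (v x) - 1) + h x) ∧
  Filter.Tendsto u (atInfty n) (nhds 0) ∧
  Filter.Tendsto v (atInfty n) (nhds 0)

/-- The boundary δΩ = {y ∉ Ω : ∃ x ∈ Ω, x ~ y}. -/
def bdry {n : ℕ} (Ω : Set (Lat n)) : Set (Lat n) := {y | y ∉ Ω ∧ ∃ x ∈ Ω, adjacent x y}

/-- Ω is connected: any two of its vertices are joined by a path of adjacent
vertices lying in Ω. -/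
def PathConnectedIn {n : ℕ} (Ω : Set (Lat n)) : Prop :=
  ∀ x ∈ Ω, ∀ y ∈ Ω, ∃ (k : ℕ) (c : ℕ → Lat n),
    c 0 = x ∧ c k = y ∧ (∀ i ≤ k, c i ∈ Ω) ∧ ∀ i < k, adjacent (c i) (c (i + 1))

/-- The iterative scheme: u₀ = v₀ = 0 and, for k ≥ 1,
(Δ − L)u_k = λ e^{v_{k−1}} (e^{u_{k−1}} − 1) + g − L u_{k−1} in Ω,
(Δ − L)v_k = λ e^{u_{k−1}} (e^{v_{k−1}} − 1) + h − L v_{k−1} in Ω,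
with u_k = v_k = 0 off Ω (in particular on δΩ). -/
def IterSeq {n : ℕ} (Ω : Set (Lat n)) (L lam : ℝ) (g h : Lat n → ℝ)
    (u v : ℕ → Lat n → ℝ) : Prop :=
  (∀ x, u 0 x = 0) ∧ (∀ x, v 0 x = 0) ∧
  (∀ k : ℕ, ∀ x ∈ Ω,
      lapl (u (k + 1)) x - L * u (k + 1) x
        = lam * Real.exp (v k x) * (Real.exp (u k x) - 1) + g x - L * u k x) ∧
  (∀ k : ℕ, ∀ x ∈ Ω,
      lapl (v (k + 1)) x - L * v (k + 1) x
        = lam * Real.exp (u k x) * (Real.exp (v k x) - 1) + h x - L * v k x) ∧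
  (∀ k : ℕ, ∀ x, x ∉ Ω → u (k + 1) x = 0) ∧
  (∀ k : ℕ, ∀ x, x ∉ Ω → v (k + 1) x = 0)

section Lattice

variable {n : ℕ} {Ω : Set (Lat n)} {x y : Lat n}

lemma adjacent_add_unitVec (x : Lat n) (i : Fin n) : adjacent x (x + unitVec i) := by
  simp [adjacent, unitVec, apply_ite Int.natAbs]

lemma adjacent_sub_unitVec (x : Lat n) (i : Fin n) : adjacent x (x - unitVec i) := by
  simp [adjacent, unitVec, apply_ite Int.natAbs]

lemma adjacent.mem_Icc (hxy : adjacent x y) : y ∈ Set.Icc (x - 1) (x + 1) := by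
  have hcoord (i : Fin n) : (x i - y i).natAbs ≤ 1 :=
    (Finset.single_le_sum (f := fun i => (x i - y i).natAbs) (fun _ _ => Nat.zero_le _)
      (Finset.mem_univ i)).trans_eq hxy
  constructor <;> intro i <;> have := hcoord i <;>
    simp only [Pi.sub_apply, Pi.add_apply, Pi.one_apply] <;> lia

lemma finite_bdry (hΩ : Ω.Finite) : (bdry Ω).Finite := by
  refine (hΩ.biUnion fun x _ => Set.finite_Icc (x - 1) (x + 1)).subset ?_
  rintro y ⟨-, x, hx, hxy⟩
  exact Set.mem_biUnion hx hxy.mem_Icc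

end Lattice

section Laplacian

variable {n : ℕ} {Ω : Set (Lat n)} {f f' : Lat n → ℝ} {x : Lat n}

@[simp]
lemma lapl_zero : lapl (0 : Lat n → ℝ) = 0 := by
  ext x
  simp [lapl]

lemma lapl_sub (f f' : Lat n → ℝ) : lapl (f - f') = lapl f - lapl f' := by
  ext x
  simp only [lapl, Pi.sub_apply, ← Finset.sum_sub_distrib]
  exact Finset.sum_congr rfl fun i _ => by ring

lemma lapl_comp_eval (φ : ℤ → ℝ) (i : Fin n) (x : Lat n) :
    lapl (fun y => φ (y i)) x = φ (x i + 1) + φ (x i - 1) - 2 * φ (x i) := by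
  rw [lapl, Finset.sum_eq_single i]
  · simp [unitVec]
  · intro j _ hj
    simp only [Pi.add_apply, Pi.sub_apply, unitVec, if_neg hj.symm, add_zero, sub_zero]
    ring
  · simp

lemma tendsto_lapl {ι : Type*} {l : Filter ι} {u : ι → Lat n → ℝ} {U : Lat n → ℝ}
    (hu : ∀ x, Tendsto (u · x) l (nhds (U x))) (x : Lat n) :
    Tendsto (fun k => lapl (u k) x) l (nhds (lapl U x)) :=
  tendsto_finsetSum _ fun _ _ => ((hu _).add (hu _)).sub ((hu x).const_mul 2)

lemma lapl_nonpos_of_forall_adjacent_le (hf : ∀ y, adjacent x y → f y ≤ f x) : lapl f x ≤ 0 := by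
  refine Finset.sum_nonpos fun i _ => ?_
  have hadd := hf _ (adjacent_add_unitVec x i)
  have hsub := hf _ (adjacent_sub_unitVec x i)
  linarith

theorem maximum_principle (hΩ : Ω.Finite) {L : ℝ} (hL : 0 < L)
    (hf : ∀ x ∈ Ω, 0 ≤ lapl f x - L * f x) (hbdry : ∀ x ∈ bdry Ω, f x ≤ 0) :
    ∀ x ∈ Ω, f x ≤ 0 := by
  intro x hx
  obtain ⟨z, hz, hmax⟩ := Set.exists_max_image Ω f hΩ ⟨x, hx⟩
  refine (hmax x hx).trans ?_
  by_contra! hpos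
  have hlapl : lapl f z ≤ 0 := lapl_nonpos_of_forall_adjacent_le fun y hzy => by
    by_cases hy : y ∈ Ω
    · exact hmax y hy
    · exact (hbdry y ⟨hy, z, hz, hzy⟩).trans hpos.le
  linarith [hf z hz, mul_pos hL hpos]

theorem comparison_principle (hΩ : Ω.Finite) {L : ℝ} (hL : 0 < L)
    (hf : ∀ x ∈ Ω, lapl f x - L * f x ≤ lapl f' x - L * f' x)
    (hbdry : ∀ x ∈ bdry Ω, f' x ≤ f x) : ∀ x ∈ Ω, f' x ≤ f x := by
  suffices ∀ x ∈ Ω, (f' - f) x ≤ 0 from fun x hx => sub_nonpos.1 (this x hx)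
  refine maximum_principle hΩ hL (fun x hx => ?_) fun x hx => sub_nonpos.2 (hbdry x hx)
  rw [lapl_sub, Pi.sub_apply, Pi.sub_apply]
  linarith [hf x hx]

lemma exists_nonpos_le_lapl (i : Fin n) (hΩ : Ω.Finite) (g : Lat n → ℝ) :
    ∃ w : Lat n → ℝ, (∀ x ∈ Ω, g x ≤ lapl w x) ∧ ∀ x ∈ Ω ∪ bdry Ω, w x ≤ 0 := by
  obtain ⟨C, hC⟩ := (hΩ.image g).bddAbove
  obtain ⟨R, hR⟩ := ((hΩ.union (finite_bdry hΩ)).image fun x => (x i : ℝ) ^ 2).bddAbove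
  refine ⟨fun x => |C| * ((x i : ℝ) ^ 2 - R), fun x hx => ?_, fun x hx => ?_⟩
  · calc g x ≤ C := hC (Set.mem_image_of_mem g hx)
      _ ≤ 2 * |C| := by linarith [le_abs_self C, abs_nonneg C]
      _ = lapl (fun y => |C| * ((y i : ℝ) ^ 2 - R)) x := by
        rw [lapl_comp_eval (fun t : ℤ => |C| * ((t : ℝ) ^ 2 - R))]
        push_cast
        ring
  · exact mul_nonpos_of_nonneg_of_nonpos (abs_nonneg C)
      (sub_nonpos.2 (hR (Set.mem_image_of_mem _ hx)))

end Laplacian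

lemma exp_sub_exp_le_mul_sub (a b : ℝ) : exp a - exp b ≤ exp a * (a - b) := by
  have htangent := mul_le_mul_of_nonneg_left (add_one_le_exp (b - a)) (exp_pos a).le
  rw [← exp_add, add_sub_cancel] at htangent
  linarith

lemma antitoneOn_reaction_sub_mul {lam L : ℝ} (hlam : 0 ≤ lam) (hlamL : lam ≤ L) :
    AntitoneOn (fun z : ℝ × ℝ => lam * exp z.2 * (exp z.1 - 1) - L * z.1) (Set.Iic 0) := by
  rintro ⟨a', b'⟩ ⟨-, hb' : b' ≤ 0⟩ ⟨a, b⟩ ⟨ha : a ≤ 0, -⟩ ⟨haa : a' ≤ a, hbb : b' ≤ b⟩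
  have hexp_a : exp a ≤ 1 := exp_le_one_iff.2 ha
  have hexp_b' : exp b' ≤ 1 := exp_le_one_iff.2 hb'
  have hL : 0 ≤ L := hlam.trans hlamL
  have hincr : lam * exp b' * (exp a - exp a') ≤ L * (a - a') :=
    calc lam * exp b' * (exp a - exp a')
        ≤ lam * exp b' * (exp a * (a - a')) := by gcongr; exact exp_sub_exp_le_mul_sub a a'
      _ ≤ L * 1 * (1 * (a - a')) := by gcongr
      _ = L * (a - a') := by ring
  have hexp_bb : lam * exp b * (exp a - 1) ≤ lam * exp b' * (exp a - 1) :=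
    mul_le_mul_of_nonpos_right (by gcongr) (sub_nonpos.2 hexp_a)
  change lam * exp b * (exp a - 1) - L * a ≤ lam * exp b' * (exp a' - 1) - L * a'
  linarith

lemma mul_exp_mul_exp_sub_one_nonpos {lam a : ℝ} (hlam : 0 ≤ lam) (ha : a ≤ 0) (b : ℝ) :
    lam * exp b * (exp a - 1) ≤ 0 :=
  mul_nonpos_of_nonneg_of_nonpos (mul_nonneg hlam (exp_pos b).le)
    (sub_nonpos.2 (exp_le_one_iff.2 ha))

namespace IterSeq

variable {n : ℕ} {Ω : Set (Lat n)} {L lam : ℝ} {g h : Lat n → ℝ} {u v : ℕ → Lat n → ℝ}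

lemma swap (hiter : IterSeq Ω L lam g h u v) : IterSeq Ω L lam h g v u :=
  let ⟨hu₀, hv₀, hu, hv, hu_off, hv_off⟩ := hiter
  ⟨hv₀, hu₀, hv, hu, hv_off, hu_off⟩

lemma zero_eq (hiter : IterSeq Ω L lam g h u v) : u 0 = 0 :=
  funext hiter.1

lemma lapl_succ_sub (hiter : IterSeq Ω L lam g h u v) (k : ℕ) {x : Lat n} (hx : x ∈ Ω) :
    lapl (u (k + 1)) x - L * u (k + 1) x =
      lam * exp (v k x) * (exp (u k x) - 1) + g x - L * u k x :=
  hiter.2.2.1 k x hx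

lemma eq_zero_of_notMem (hiter : IterSeq Ω L lam g h u v) (k : ℕ) {x : Lat n} (hx : x ∉ Ω) :
    u k x = 0 := by
  cases k with
  | zero => exact hiter.1 x
  | succ k => exact hiter.2.2.2.2.1 k x hx

lemma succ_le_of_lapl_sub_le (hiter : IterSeq Ω L lam g h u v) (hΩ : Ω.Finite) (hL : 0 < L)
    {k : ℕ} {f : Lat n → ℝ} (hf : ∀ x ∈ Ω, lapl f x - L * f x ≤
      lam * exp (v k x) * (exp (u k x) - 1) + g x - L * u k x) (hf_off : ∀ x ∉ Ω, 0 ≤ f x) :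
    u (k + 1) ≤ f := by
  have hoff (x : Lat n) (hx : x ∉ Ω) : u (k + 1) x ≤ f x :=
    (hiter.eq_zero_of_notMem _ hx).trans_le (hf_off x hx)
  intro x
  by_cases hx : x ∈ Ω
  · refine comparison_principle hΩ hL (fun y hy => ?_) (fun y hy => hoff y hy.1) x hx
    exact (hf y hy).trans_eq (hiter.lapl_succ_sub k hy).symm
  · exact hoff x hx

lemma one_le_zero (hiter : IterSeq Ω L lam g h u v) (hΩ : Ω.Finite) (hL : 0 < L)
    (hg : ∀ x ∈ Ω, 0 ≤ g x) : u 1 ≤ u 0 :=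
  hiter.succ_le_of_lapl_sub_le hΩ hL
    (fun x hx => by simpa [hiter.zero_eq] using hg x hx) fun x _ => (hiter.1 x).ge

lemma succ_le_succ (hiter : IterSeq Ω L lam g h u v) (hΩ : Ω.Finite) (hL : 0 < L)
    (hlam : 0 ≤ lam) (hlamL : lam ≤ L) {k : ℕ} (hu : u (k + 1) ≤ u k) (hv : v (k + 1) ≤ v k)
    (hu₀ : u k ≤ 0) (hv₀ : v k ≤ 0) : u (k + 2) ≤ u (k + 1) := by
  refine hiter.succ_le_of_lapl_sub_le hΩ hL (fun x hx => ?_)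
    fun x hx => (hiter.eq_zero_of_notMem _ hx).ge
  have hreaction := antitoneOn_reaction_sub_mul hlam hlamL
    (a := (u (k + 1) x, v (k + 1) x)) (b := (u k x, v k x))
    ⟨(hu x).trans (hu₀ x), (hv x).trans (hv₀ x)⟩ ⟨hu₀ x, hv₀ x⟩ ⟨hu x, hv x⟩
  rw [hiter.lapl_succ_sub k hx]
  linarith

lemma succ_le_and_nonpos (hiter : IterSeq Ω L lam g h u v) (hΩ : Ω.Finite) (hL : 0 < L)
    (hlam : 0 ≤ lam) (hlamL : lam ≤ L) (hg : ∀ x ∈ Ω, 0 ≤ g x) (hh : ∀ x ∈ Ω, 0 ≤ h x) (k : ℕ) :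
    (u (k + 1) ≤ u k ∧ v (k + 1) ≤ v k) ∧ u k ≤ 0 ∧ v k ≤ 0 := by
  induction k with
  | zero =>
    exact ⟨⟨hiter.one_le_zero hΩ hL hg, hiter.swap.one_le_zero hΩ hL hh⟩,
      hiter.zero_eq.le, hiter.swap.zero_eq.le⟩
  | succ k ih =>
    obtain ⟨⟨hu, hv⟩, hu₀, hv₀⟩ := ih
    exact ⟨⟨hiter.succ_le_succ hΩ hL hlam hlamL hu hv hu₀ hv₀,
      hiter.swap.succ_le_succ hΩ hL hlam hlamL hv hu hv₀ hu₀⟩, hu.trans hu₀, hv.trans hv₀⟩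

lemma le_of_le_lapl (hiter : IterSeq Ω L lam g h u v) (hΩ : Ω.Finite) (hL : 0 < L)
    (hlam : 0 ≤ lam) (hu : ∀ k, u k ≤ 0) {w : Lat n → ℝ} (hw : ∀ x ∈ Ω, g x ≤ lapl w x)
    (hw₀ : ∀ x ∈ Ω ∪ bdry Ω, w x ≤ 0) (k : ℕ) : ∀ x ∈ Ω, w x ≤ u k x := by
  induction k with
  | zero =>
    intro x hx
    simpa [hiter.zero_eq] using hw₀ x (.inl hx)
  | succ k ih =>
    refine comparison_principle hΩ hL (fun x hx => ?_) fun x hx => ?_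
    · calc lapl (u (k + 1)) x - L * u (k + 1) x
          = lam * exp (v k x) * (exp (u k x) - 1) + g x - L * u k x := hiter.lapl_succ_sub k hx
        _ ≤ 0 + lapl w x - L * w x := by
          gcongr
          · exact mul_exp_mul_exp_sub_one_nonpos hlam (hu k x) _
          · exact hw x hx
          · exact ih x hx
        _ = lapl w x - L * w x := by rw [zero_add]
    · rw [hiter.eq_zero_of_notMem _ hx.1]
      exact hw₀ x (.inr hx)

lemma bddBelow_range (hiter : IterSeq Ω L lam g h u v) (i : Fin n) (hΩ : Ω.Finite) (hL : 0 < L)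
    (hlam : 0 ≤ lam) (hu : ∀ k, u k ≤ 0) (x : Lat n) : BddBelow (Set.range (u · x)) := by
  by_cases hx : x ∈ Ω
  · obtain ⟨w, hw, hw₀⟩ := exists_nonpos_le_lapl i hΩ g
    exact ⟨w x, Set.forall_mem_range.2 fun k => hiter.le_of_le_lapl hΩ hL hlam hu hw hw₀ k x hx⟩
  · exact ⟨0, Set.forall_mem_range.2 fun k => (hiter.eq_zero_of_notMem k hx).ge⟩

lemma exists_tendsto (hiter : IterSeq Ω L lam g h u v) (i : Fin n) (hΩ : Ω.Finite) (hL : 0 < L)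
    (hlam : 0 ≤ lam) (hlamL : lam ≤ L) (hg : ∀ x ∈ Ω, 0 ≤ g x) (hh : ∀ x ∈ Ω, 0 ≤ h x) :
    ∃ U : Lat n → ℝ, ∀ x, Tendsto (u · x) atTop (nhds (U x)) := by
  have hmono := hiter.succ_le_and_nonpos hΩ hL hlam hlamL hg hh
  have hanti : Antitone u := antitone_nat_of_succ_le fun k => (hmono k).1.1
  exact ⟨fun x => ⨅ k, u k x, fun x => tendsto_atTop_ciInf (fun _ _ hkj => hanti hkj x)
    (hiter.bddBelow_range i hΩ hL hlam (fun k => (hmono k).2.1) x)⟩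

lemma lapl_eq_of_tendsto (hiter : IterSeq Ω L lam g h u v) {U V : Lat n → ℝ}
    (hU : ∀ x, Tendsto (u · x) atTop (nhds (U x)))
    (hV : ∀ x, Tendsto (v · x) atTop (nhds (V x))) {x : Lat n} (hx : x ∈ Ω) :
    lapl U x = lam * exp (V x) * (exp (U x) - 1) + g x := by
  have hleft : Tendsto (fun k => lapl (u (k + 1)) x - L * u (k + 1) x) atTop
      (nhds (lapl U x - L * U x)) :=
    ((tendsto_lapl hU x).sub ((hU x).const_mul L)).comp (tendsto_add_atTop_nat 1)
  have hright : Tendsto (fun k => lam * exp (v k x) * (exp (u k x) - 1) + g x - L * u k x) atTop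
      (nhds (lam * exp (V x) * (exp (U x) - 1) + g x - L * U x)) :=
    ((((hV x).rexp.const_mul lam).mul ((hU x).rexp.sub_const 1)).add_const (g x)).sub
      ((hU x).const_mul L)
  simp only [hiter.lapl_succ_sub _ hx] at hleft
  exact sub_left_injective (tendsto_nhds_unique hleft hright)

lemma limit_eq_zero_of_notMem (hiter : IterSeq Ω L lam g h u v) {x : Lat n} {a : ℝ}
    (ha : Tendsto (u · x) atTop (nhds a)) (hx : x ∉ Ω) : a = 0 :=
  tendsto_nhds_unique ha (tendsto_const_nhds.congr fun k => (hiter.eq_zero_of_notMem k hx).symm)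

end IterSeq

theorem iterative_scheme_converges_general {n : ℕ} (hn : 0 < n) {lam L : ℝ} (hlam : 0 ≤ lam)
    (hL : 0 < L) (hlamL : lam ≤ L) {g h : Lat n → ℝ} {Ω : Set (Lat n)} (hΩ : Ω.Finite)
    (hg : ∀ x ∈ Ω, 0 ≤ g x) (hh : ∀ x ∈ Ω, 0 ≤ h x) {u v : ℕ → Lat n → ℝ}
    (hiter : IterSeq Ω L lam g h u v) :
    ∃ uΩ vΩ : Lat n → ℝ,
      (∀ x, Tendsto (fun k => u k x) atTop (nhds (uΩ x))) ∧
      (∀ x, Tendsto (fun k => v k x) atTop (nhds (vΩ x))) ∧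
      (∀ x ∈ Ω, lapl uΩ x = lam * exp (vΩ x) * (exp (uΩ x) - 1) + g x) ∧
      (∀ x ∈ Ω, lapl vΩ x = lam * exp (uΩ x) * (exp (vΩ x) - 1) + h x) ∧
      (∀ x ∉ Ω, uΩ x = 0 ∧ vΩ x = 0) := by
  obtain ⟨uΩ, hu⟩ := hiter.exists_tendsto ⟨0, hn⟩ hΩ hL hlam hlamL hg hh
  obtain ⟨vΩ, hv⟩ := hiter.swap.exists_tendsto ⟨0, hn⟩ hΩ hL hlam hlamL hh hg
  exact ⟨uΩ, vΩ, hu, hv, fun x hx => hiter.lapl_eq_of_tendsto hu hv hx,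
    fun x hx => hiter.swap.lapl_eq_of_tendsto hv hu hx,
    fun x hx => ⟨hiter.limit_eq_zero_of_notMem (hu x) hx,
      hiter.swap.limit_eq_zero_of_notMem (hv x) hx⟩⟩

lemma dirac_nonneg {n : ℕ} (p x : Lat n) : 0 ≤ dirac p x :=
  ite_nonneg zero_le_one le_rfl

lemma four_pi_mul_sum_dirac_nonneg {n : ℕ} {ι : Type*} [Fintype ι] (m : ι → ℕ) (p : ι → Lat n)
    (x : Lat n) : 0 ≤ 4 * Real.pi * ∑ j, (m j : ℝ) * dirac (p j) x :=
  mul_nonneg (by positivity)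
    (Finset.sum_nonneg fun _ _ => mul_nonneg (Nat.cast_nonneg _) (dirac_nonneg _ _))

/-- the iterative sequences converge pointwise on Ω̄ to a
solution (u_Ω, v_Ω) of the system in Ω vanishing on δΩ. -/
theorem iterative_scheme_converges
    {n : ℕ} (hn : 2 ≤ n) (lam L : ℝ) (hlam : 0 < lam) (hL : 2 * lam < L)
    {k₁ k₂ : ℕ} (m : Fin k₁ → ℕ) (nn : Fin k₂ → ℕ)
    (p : Fin k₁ → Lat n) (q : Fin k₂ → Lat n)
    (g h : Lat n → ℝ)
    (hg : g = fun x => 4 * Real.pi * ∑ j, (m j : ℝ) * dirac (p j) x)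
    (hh : h = fun x => 4 * Real.pi * ∑ j, (nn j : ℝ) * dirac (q j) x)
    (Ω : Set (Lat n)) (hfin : Ω.Finite) (hconn : PathConnectedIn Ω)
    (hp : ∀ j, p j ∈ Ω) (hq : ∀ j, q j ∈ Ω)
    (u v : ℕ → Lat n → ℝ) (hiter : IterSeq Ω L lam g h u v) :
    ∃ uΩ vΩ : Lat n → ℝ,
      (∀ x, Filter.Tendsto (fun k => u k x) Filter.atTop (nhds (uΩ x))) ∧
      (∀ x, Filter.Tendsto (fun k => v k x) Filter.atTop (nhds (vΩ x))) ∧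
      (∀ x ∈ Ω, lapl uΩ x = lam * Real.exp (vΩ x) * (Real.exp (uΩ x) - 1) + g x) ∧
      (∀ x ∈ Ω, lapl vΩ x = lam * Real.exp (uΩ x) * (Real.exp (vΩ x) - 1) + h x) ∧
      (∀ x ∈ bdry Ω, uΩ x = 0 ∧ vΩ x = 0) := by
  obtain ⟨uΩ, vΩ, hu, hv, hu_eq, hv_eq, hoff⟩ := iterative_scheme_converges_general
    (by lia) hlam.le (by linarith) (by linarith) hfin
    (fun x _ => hg ▸ four_pi_mul_sum_dirac_nonneg m p x)
    (fun x _ => hh ▸ four_pi_mul_sum_dirac_nonneg nn q x) hiter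
  exact ⟨uΩ, vΩ, hu, hv, hu_eq, hv_eq, fun x hx => hoff x hx.1⟩

end CS
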